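/- arXiv:2205.03581 — 3 statements merged into one kernel-verified Lean document; each statement's English description precedes it below -/
import Mathlib

section
/- Let A be a complex unital Banach algebra and a ∈ A. Then a is ag-Drazin invertible if and only if 0 is not an accumulation point of the generalized Drazin spectrum σ_d(a). -/
open Filter Topology

/-- An element of a complex Banach algebra is quasinilpotent if its spectrum is `{0}`. -/
def IsQuasinilpotent {A : Type*} [NormedRing A] [NormedAlgebra ℂ A] (b : A) : Prop :=
  spectrum ℂ b = {0}

/-- `a` is generalized Drazin invertible. -/
def IsGDrazinInv {A : Type*} [NormedRing A] [NormedAlgebra ℂ A] (a : A) : Prop :=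
  ∃ x : A, a * x = x * a ∧ x * a * x = x ∧ IsQuasinilpotent (a - a ^ 2 * x)

/-- `a ∈ A^acc`: `a - λ1` is generalized Drazin invertible for all nonzero `λ`. -/
def MemAcc {A : Type*} [NormedRing A] [NormedAlgebra ℂ A] (a : A) : Prop :=
  ∀ l : ℂ, l ≠ 0 → IsGDrazinInv (a - l • (1 : A))

/-- `x` is an ag-Drazin inverse of `a`. -/
def IsAgDrazinInverseOf {A : Type*} [NormedRing A] [NormedAlgebra ℂ A] (x a : A) : Prop :=
  a * x = x * a ∧ x * a * x = x ∧ MemAcc (a - a ^ 2 * x)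

/-- `a` is ag-Drazin invertible. -/
def IsAgDrazinInv {A : Type*} [NormedRing A] [NormedAlgebra ℂ A] (a : A) : Prop :=
  ∃ x : A, IsAgDrazinInverseOf x a

/-- The generalized Drazin spectrum. -/
def gDrazinSpectrum {A : Type*} [NormedRing A] [NormedAlgebra ℂ A] (a : A) : Set ℂ :=
  {l : ℂ | ¬ IsGDrazinInv (a - l • (1 : A))}

/-- The ag-Drazin spectrum. -/
def agDrazinSpectrum {A : Type*} [NormedRing A] [NormedAlgebra ℂ A] (a : A) : Set ℂ :=
  {l : ℂ | ¬ IsAgDrazinInv (a - l • (1 : A))}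

/-!
Write `b = a - a²x` for a commuting outer inverse `x` of `a`. The idempotent `ax` splits `a` into
`b` and a part invertible in its corner, so `b` and `a` have the same spectrum near `0`, apart from
`0` itself, and the nonzero spectrum of `b` lies in that of `a`. Conversely, a circle about `0`
missing the spectrum of `a` yields an `x` for which the spectrum of `b` lies inside the circle: the
complementary idempotent is the Riesz projection of the enclosed part of the spectrum, obtained,
after rescaling to the unit circle, as `lim (1 - a ^ 2 ^ k)⁻¹`, since `(1 - a ^ n)⁻¹` is the average
of `(1 - ζa)⁻¹` over the `n`-th roots of unity `ζ`.

Hence the generalized Drazin spectrum is the derived set of the spectrum, and `a` is ag-Drazin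
invertible exactly when `0` is not in the second derived set: in that case the spectrum is discrete
in a punctured disc about `0`, which leaves arbitrarily small circles free.
-/

open Metric Set

open scoped Ring

section DerivedSet

theorem notMem_derivedSet_iff {X : Type*} [TopologicalSpace X] {S : Set X} {x : X} :
    x ∉ derivedSet S ↔ ∀ᶠ y in 𝓝[≠] x, y ∉ S := by
  rw [mem_derivedSet, accPt_iff_frequently_nhdsNE, not_frequently]

theorem mem_derivedSet_congr {X : Type*} [TopologicalSpace X] {S T : Set X} {x : X}
    (h : ∀ᶠ y in 𝓝[≠] x, y ∈ S ↔ y ∈ T) : x ∈ derivedSet S ↔ x ∈ derivedSet T := by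
  simp only [mem_derivedSet, accPt_iff_frequently_nhdsNE]
  exact frequently_congr h

theorem eventually_mem_derivedSet_congr {X : Type*} [TopologicalSpace X] [T1Space X] {S T : Set X}
    {x : X} (h : ∀ᶠ y in 𝓝[≠] x, y ∈ S ↔ y ∈ T) :
    ∀ᶠ y in 𝓝[≠] x, y ∈ derivedSet S ↔ y ∈ derivedSet T := by
  filter_upwards [eventually_nhdsNE_eventually_nhds_iff.2 h] with y hy
  exact mem_derivedSet_congr (hy.filter_mono nhdsWithin_le_nhds)

theorem derivedSet_singleton {X : Type*} [TopologicalSpace X] [T1Space X] (x : X) :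
    derivedSet {x} = ∅ :=
  eq_empty_of_forall_notMem fun y hy =>
    (accPt_iff_frequently_nhdsNE.1 hy) <|
      nhdsNE_le_cofinite y (finite_singleton x).compl_mem_cofinite

theorem finite_inter_of_disjoint_derivedSet {X : Type*} [TopologicalSpace X] {S K : Set X}
    (hK : IsCompact K) (h : Disjoint K (derivedSet S)) : (S ∩ K).Finite := by
  by_contra hinf
  obtain ⟨x, hxK, hx⟩ := Set.Infinite.exists_accPt_of_subset_isCompact hinf hK inter_subset_right
  exact h.notMem_of_mem_left hxK (derivedSet_mono _ _ inter_subset_left hx)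

theorem eventually_forall_mem_ball_of_eventually_nhdsNE {X : Type*} [PseudoMetricSpace X] {c : X}
    {p : X → Prop} (h : ∀ᶠ x in 𝓝[≠] c, p x) :
    ∀ᶠ r in 𝓝[>] (0 : ℝ), ∀ x ∈ ball c r, x ≠ c → p x := by
  obtain ⟨ε, hε, hp⟩ := Metric.eventually_nhds_iff.1 (eventually_nhdsWithin_iff.1 h)
  filter_upwards [Ioo_mem_nhdsGT hε] with r hr x hx
  exact hp ((mem_ball.1 hx).trans hr.2)

theorem frequently_disjoint_sphere_of_notMem_derivedSet_derivedSet {X : Type*}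
    [PseudoMetricSpace X] [ProperSpace X] {S : Set X} {c : X}
    (h : c ∉ derivedSet (derivedSet S)) : ∃ᶠ r in 𝓝[>] (0 : ℝ), Disjoint (sphere c r) S := by
  refine (nhdsGT_basis (0 : ℝ)).frequently_iff.2 fun δ hδ => ?_
  obtain ⟨t, ht, htδ⟩ :=
    ((eventually_forall_mem_ball_of_eventually_nhdsNE (notMem_derivedSet_iff.1 h)).and
      (Ioo_mem_nhdsGT hδ)).exists
  let annulus : Set X := (dist · c) ⁻¹' Icc (t / 3) (t / 2)
  have hcompact : IsCompact annulus :=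
    (isCompact_closedBall c (t / 2)).of_isClosed_subset
      (isClosed_Icc.preimage (continuous_id.dist continuous_const)) fun x hx => hx.2
  have hdisj : Disjoint annulus (derivedSet S) := by
    refine disjoint_left.2 fun x hx => ht x (mem_ball.2 ?_) ?_
    · linarith [hx.2, htδ.1]
    · rintro rfl
      linarith [hx.1, htδ.1, dist_self x]
  have hfinite : ((dist · c) '' (S ∩ annulus)).Finite :=
    (finite_inter_of_disjoint_derivedSet hcompact hdisj).image _
  obtain ⟨r, hr, hrS⟩ :=
    (Icc_infinite (show t / 3 < t / 2 by linarith [htδ.1])).exists_notMem_finite hfinite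
  refine ⟨r, ⟨by linarith [hr.1, htδ.1], by linarith [hr.2, htδ.1, htδ.2]⟩, ?_⟩
  refine disjoint_left.2 fun x hx hxS => hrS ⟨x, ⟨hxS, ?_⟩, hx⟩
  rwa [mem_preimage, mem_sphere.1 hx]

end DerivedSet

section OuterInverse

theorem isUnit_iff_isUnit_corners {R : Type*} [Ring R] {b e : R} (he : IsIdempotentElem e)
    (hbe : Commute b e) : IsUnit b ↔ IsUnit (b * (1 - e) + e) ∧ IsUnit (b * e + (1 - e)) := by
  have hcomm : Commute (b * (1 - e) + e) (b * e + (1 - e)) := by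
    have hb : Commute b (1 - e) := (Commute.one_right b).sub_right hbe
    have he' : Commute e (1 - e) := (Commute.one_right e).sub_right (Commute.refl e)
    exact ((((Commute.refl b).mul_right hbe).add_right hb).mul_left
      ((hb.symm.mul_right he'.symm).add_right (Commute.refl _))).add_left
      ((hbe.symm.mul_right (Commute.refl e)).add_right he')
  have hprod : (b * (1 - e) + e) * (b * e + (1 - e)) = b := by
    have hbbe : (1 - e) * b * e = 0 := by
      rw [mul_assoc, hbe.eq, ← mul_assoc, he.one_sub_mul_self, zero_mul]
    calc (b * (1 - e) + e) * (b * e + (1 - e))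
        = b * ((1 - e) * b * e) + b * ((1 - e) * (1 - e)) + e * b * e + e * (1 - e) := by
          noncomm_ring
      _ = b := by
          rw [hbbe, he.one_sub.eq, ← hbe.eq, mul_assoc, he.eq, he.mul_one_sub_self]
          noncomm_ring
  rw [← hcomm.isUnit_mul_iff, hprod]

theorem isUnit_smul_add_one_sub {K R : Type*} [Field K] [Ring R] [Algebra K R] {e : R}
    (he : IsIdempotentElem e) {z : K} (hz : z ≠ 0) : IsUnit (z • e + (1 - e)) := by
  have hmul {s t : K} (hst : s * t = 1) : (s • e + (1 - e)) * (t • e + (1 - e)) = 1 := by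
    simp only [add_mul, mul_add, smul_mul_assoc, mul_smul_comm, he.eq, he.mul_one_sub_self,
      he.one_sub_mul_self, he.one_sub.eq]
    linear_combination (norm := module) hst • e
  exact ⟨⟨_, _, hmul (mul_inv_cancel₀ hz), hmul (inv_mul_cancel₀ hz)⟩, rfl⟩

theorem isIdempotentElem_mul_of_mul_mul_eq {R : Type*} [Semigroup R] {a x : R}
    (houter : x * a * x = x) : IsIdempotentElem (a * x) := by
  rw [IsIdempotentElem, mul_assoc, ← mul_assoc x, houter]

theorem isUnit_neg_mul_add_one_sub_of_outerInverse {R : Type*} [Ring R] {a x : R}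
    (hcomm : Commute a x) (houter : x * a * x = x) :
    IsUnit (-a * (a * x) + (1 - a * x)) := by
  have he : IsIdempotentElem (a * x) := isIdempotentElem_mul_of_mul_mul_eq houter
  have hex : a * x * x = x := by rw [hcomm.eq, houter]
  have hxe : x * (a * x) = x := by rw [← mul_assoc, houter]
  have heae : (1 - a * x) * a * (a * x) = 0 := by
    rw [mul_assoc, ((Commute.refl a).mul_right hcomm).eq, ← mul_assoc, he.one_sub_mul_self,
      zero_mul]
  refine ⟨⟨_, -x + (1 - a * x), ?_, ?_⟩, rfl⟩
  · calc (-a * (a * x) + (1 - a * x)) * (-x + (1 - a * x))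
        = a * (a * x * x) - a * (a * x * (1 - a * x)) - (x - a * x * x)
            + (1 - a * x) * (1 - a * x) := by noncomm_ring
      _ = 1 := by
        rw [hex, he.mul_one_sub_self, he.one_sub.eq]
        noncomm_ring
  · calc (-x + (1 - a * x)) * (-a * (a * x) + (1 - a * x))
        = x * a * (a * x) - (x - x * (a * x)) - (1 - a * x) * a * (a * x)
            + (1 - a * x) * (1 - a * x) := by noncomm_ring
      _ = 1 := by
        rw [← hcomm.eq, he.eq, hxe, heae, he.one_sub.eq]
        noncomm_ring

theorem mem_resolventSet_iff_of_outerInverse {K R : Type*} [Field K] [Ring R] [Algebra K R]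
    {a x : R} (hcomm : Commute a x) (houter : x * a * x = x) {z : K} (hz : z ≠ 0) :
    z ∈ resolventSet K a ↔ z ∈ resolventSet K (a - a ^ 2 * x) ∧
      IsUnit ((algebraMap K R z - a) * (a * x) + (1 - a * x)) := by
  have he : IsIdempotentElem (a * x) := isIdempotentElem_mul_of_mul_mul_eq houter
  have hae : Commute a (a * x) := (Commute.refl a).mul_right hcomm
  have hze (c : R) : Commute (algebraMap K R z) c := Algebra.commutes z c
  have hb : a - a ^ 2 * x = a * (1 - a * x) := by noncomm_ring
  have hbe : Commute (a - a ^ 2 * x) (a * x) := by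
    rw [hb]
    exact hae.mul_left ((Commute.one_left _).sub_left (Commute.refl _))
  have hcorner : (algebraMap K R z - (a - a ^ 2 * x)) * (1 - a * x) + a * x =
      (algebraMap K R z - a) * (1 - a * x) + a * x := by
    rw [hb, sub_mul, mul_assoc, he.one_sub.eq, sub_mul]
  have hscalar : (algebraMap K R z - (a - a ^ 2 * x)) * (a * x) = z • (a * x) := by
    rw [hb, sub_mul, mul_assoc, he.one_sub_mul_self, mul_zero, sub_zero, Algebra.smul_def]
  rw [spectrum.mem_resolventSet_iff, spectrum.mem_resolventSet_iff,
    isUnit_iff_isUnit_corners he ((hze _).sub_left hae),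
    isUnit_iff_isUnit_corners he ((hze _).sub_left hbe), hcorner, hscalar,
    and_iff_left (isUnit_smul_add_one_sub he hz)]

theorem spectrum_sub_sq_mul_subset_insert_zero {K R : Type*} [Field K] [Ring R] [Algebra K R]
    {a x : R} (hcomm : Commute a x) (houter : x * a * x = x) :
    spectrum K (a - a ^ 2 * x) ⊆ insert 0 (spectrum K a) := fun _ hz =>
  or_iff_not_imp_left.2 fun hz0 hza =>
    hz ((mem_resolventSet_iff_of_outerInverse hcomm houter hz0).1 hza).1

theorem eventually_mem_spectrum_iff_mem_spectrum_sub_sq_mul {𝕜 A : Type*}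
    [NontriviallyNormedField 𝕜] [NormedRing A] [NormedAlgebra 𝕜 A] [CompleteSpace A] {a x : A}
    (hcomm : Commute a x) (houter : x * a * x = x) :
    ∀ᶠ z in 𝓝[≠] (0 : 𝕜), z ∈ spectrum 𝕜 a ↔ z ∈ spectrum 𝕜 (a - a ^ 2 * x) := by
  let corner (z : 𝕜) : A := (algebraMap 𝕜 A z - a) * (a * x) + (1 - a * x)
  have hcorner : Continuous corner :=
    (((continuous_algebraMap 𝕜 A).sub continuous_const).mul continuous_const).add continuous_const
  have hcorner0 : IsUnit (corner 0) := by
    simpa only [corner, map_zero, zero_sub] using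
      isUnit_neg_mul_add_one_sub_of_outerInverse hcomm houter
  have hunit : ∀ᶠ z in 𝓝 (0 : 𝕜), IsUnit (corner z) :=
    hcorner.continuousAt.eventually (Units.isOpen.mem_nhds hcorner0)
  filter_upwards [hunit.filter_mono nhdsWithin_le_nhds, self_mem_nhdsWithin] with z hz hz0
  exact not_congr <|
    (mem_resolventSet_iff_of_outerInverse hcomm houter hz0).trans (and_iff_left hz)

end OuterInverse

section RieszProjection

section CommRing

variable {R : Type*} [CommRing R] {w P Q : R}

theorem two_mul_mul_eq_add_of_inverses (hP : (1 - w) * P = 1) (hQ : (1 + w) * Q = 1) :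
    2 * (P * Q) = P + Q := by
  linear_combination Q * hP + P * hQ

theorem four_mul_mul_sub_sq_eq_add_of_inverses (hP : (1 - w) * P = 1) (hQ : (1 + w) * Q = 1) :
    4 * (P * Q - (P * Q) ^ 2) = (P - P ^ 2) + (Q - Q ^ 2) := by
  linear_combination
    (1 - (2 * (P * Q) + P + Q)) * two_mul_mul_eq_add_of_inverses hP hQ

theorem sub_mul_eq_mul_sub_sq_of_inverses (hP : (1 - w) * P = 1) (hQ : (1 + w) * Q = 1) :
    P - P * Q = (1 - 2 * Q) * (P - P ^ 2) := by
  linear_combination (-P) * two_mul_mul_eq_add_of_inverses hP hQ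

theorem exists_outerInverse_of_isUnit_corner {a p : R} (hp : IsIdempotentElem p)
    (hu : IsUnit (a * (1 - p) + p)) : ∃ x, x * a * x = x ∧ a - a ^ 2 * x = a * p := by
  obtain ⟨y, hy⟩ := hu.exists_right_inv
  refine ⟨(1 - p) * y, ?_, ?_⟩
  · linear_combination ((1 - p) * y) * hy + y * y * hp.eq
  · linear_combination (-a * (1 - p)) * hy - (a * y - a ^ 2 * y) * hp.eq

theorem corner_pow {a p : R} (hp : IsIdempotentElem p) (n : ℕ) :
    (a * (1 - p) + p) ^ n = a ^ n * (1 - p) + p := by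
  induction n with
  | zero => simp
  | succ n ih =>
    rw [pow_succ, ih, pow_succ]
    linear_combination (1 - a - a ^ n + a ^ n * a) * hp.eq

end CommRing

section NormedCommRing

variable {B : Type*} [NormedCommRing B]

theorem tendsto_mul_zero_of_tendsto_inverse_one_sub [CompleteSpace B] {ι : Type*} {l : Filter ι}
    {w : ι → B} {p : B} (hp : IsIdempotentElem p) (hw : ∀ i, IsUnit (1 - w i))
    (h : Tendsto (fun i => (1 - w i)⁻¹ʳ) l (𝓝 p)) : Tendsto (fun i => w i * p) l (𝓝 0) := by
  let u (i : ι) : B := (1 - w i)⁻¹ʳ * p + (1 - p)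
  have hu : Tendsto u l (𝓝 1) := by
    simpa only [hp.eq, add_sub_cancel] using (h.mul_const p).add_const (1 - p)
  have hinv : Tendsto (fun i => (u i)⁻¹ʳ) l (𝓝 1) := by
    have h1 := (NormedRing.inverse_continuousAt (1 : Bˣ)).tendsto
    rw [Units.val_one, Ring.inverse_one] at h1
    exact h1.comp hu
  have huw (i : ι) : (u i)⁻¹ʳ = 1 - w i * p := by
    have hmul : (1 - w i * p) * u i = 1 := by
      linear_combination p * Ring.mul_inverse_cancel _ (hw i) +
        (w i - w i * (1 - w i)⁻¹ʳ) * hp.eq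
    simpa only [one_mul] using ((Ring.eq_mul_inverse_iff_mul_eq _ 1 _
      (IsUnit.of_mul_eq_one_right _ hmul)).2 hmul).symm
  simpa only [huw, sub_sub_cancel, sub_self] using hinv.const_sub 1

theorem eventually_isUnit_corner_of_tendsto_inverse_one_sub [CompleteSpace B] {ι : Type*}
    {l : Filter ι} {w : ι → B} {p : B} (hp : IsIdempotentElem p) (hw : ∀ i, IsUnit (1 - w i))
    (h : Tendsto (fun i => (1 - w i)⁻¹ʳ) l (𝓝 p)) : ∀ᶠ i in l, IsUnit (w i * (1 - p) + p) := by
  have hlim : Tendsto (fun i => 1 - (1 - p) * (1 - w i)⁻¹ʳ) l (𝓝 1) := by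
    simpa only [hp.one_sub_mul_self, sub_zero] using (h.const_mul (1 - p)).const_sub 1
  filter_upwards [hlim.eventually (Units.isOpen.mem_nhds isUnit_one)] with i hi
  refine isUnit_of_mul_isUnit_left (y := p - (1 - p) * (1 - w i)⁻¹ʳ) ?_
  convert! hi using 1
  linear_combination (1 - p) * Ring.mul_inverse_cancel _ (hw i) +
    (1 + (1 - w i)⁻¹ʳ) * (1 - w i) * hp.eq

end NormedCommRing

theorem norm_natCast_mul (𝕜 : Type*) {A : Type*} [RCLike 𝕜] [NormedRing A] [NormedAlgebra 𝕜 A]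
    (n : ℕ) (b : A) : ‖(n : A) * b‖ = n * ‖b‖ := by
  rw [← nsmul_eq_mul, RCLike.norm_nsmul 𝕜, nsmul_eq_mul]

section DyadicPowers

variable {B : Type*} [NormedCommRing B] [NormedAlgebra ℂ B]

/-- On the unit circle, the inverses `(1 - z • b)⁻¹` exist, are bounded by `M`, and are idempotent
up to an error `C`. The error is halved each time `b` is replaced by `b ^ 2`. -/
def CircleInverseBound (b : B) (M C : ℝ) : Prop :=
  ∀ z : ℂ, ‖z‖ = 1 → IsUnit (1 - z • b) ∧ ‖(1 - z • b)⁻¹ʳ‖ ≤ M ∧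
    ‖(1 - z • b)⁻¹ʳ - (1 - z • b)⁻¹ʳ ^ 2‖ ≤ C

theorem exists_circleInverseBound [CompleteSpace B] {b : B}
    (h : ∀ z : ℂ, ‖z‖ = 1 → IsUnit (1 - z • b)) : ∃ M C, CircleInverseBound b M C := by
  have hcont : ContinuousOn (fun z : ℂ => (1 - z • b)⁻¹ʳ) (sphere 0 1) := fun z hz => by
    obtain ⟨u, hu⟩ := h z (mem_sphere_zero_iff_norm.1 hz)
    have hinv : ContinuousAt Ring.inverse (1 - z • b) := hu ▸ NormedRing.inverse_continuousAt u
    exact (hinv.comp (f := fun z : ℂ => 1 - z • b) (by fun_prop)).continuousWithinAt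
  obtain ⟨M, hM⟩ := (isCompact_sphere (0 : ℂ) 1).exists_bound_of_continuousOn hcont
  obtain ⟨C, hC⟩ :=
    (isCompact_sphere (0 : ℂ) 1).exists_bound_of_continuousOn (hcont.sub (hcont.pow 2))
  exact ⟨M, C, fun z hz => ⟨h z hz, hM z (mem_sphere_zero_iff_norm.2 hz),
    hC z (mem_sphere_zero_iff_norm.2 hz)⟩⟩

theorem circleInverseBound_sq {b : B} {M C : ℝ} (h : CircleInverseBound b M C) :
    CircleInverseBound (b ^ 2) M (C / 2) := by
  intro z hz
  obtain ⟨s, rfl⟩ := IsAlgClosed.exists_pow_nat_eq z two_pos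
  have hs : ‖s‖ = 1 := by
    rwa [norm_pow, pow_eq_one_iff_of_nonneg (norm_nonneg s) two_ne_zero] at hz
  obtain ⟨hunit, hM, hC⟩ := h s hs
  obtain ⟨hunit', hM', hC'⟩ := h (-s) (by rwa [norm_neg])
  rw [neg_smul, sub_neg_eq_add] at hunit' hM' hC'
  have hfactor : 1 - s ^ 2 • b ^ 2 = (1 - s • b) * (1 + s • b) := by
    rw [← smul_pow]
    ring
  have hP := Ring.mul_inverse_cancel _ hunit
  have hQ := Ring.mul_inverse_cancel _ hunit'
  rw [hfactor, Ring.mul_inverse_rev, mul_comm (1 + s • b)⁻¹ʳ]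
  set P := (1 - s • b)⁻¹ʳ
  set Q := (1 + s • b)⁻¹ʳ
  refine ⟨hunit.mul hunit', ?_, ?_⟩
  · have hnorm : 2 * ‖P * Q‖ = ‖P + Q‖ := by
      rw [← two_mul_mul_eq_add_of_inverses hP hQ]
      exact_mod_cast (norm_natCast_mul ℂ 2 _).symm
    linarith [norm_add_le P Q]
  · have hnorm : 4 * ‖P * Q - (P * Q) ^ 2‖ = ‖(P - P ^ 2) + (Q - Q ^ 2)‖ := by
      rw [← four_mul_mul_sub_sq_eq_add_of_inverses hP hQ]
      exact_mod_cast (norm_natCast_mul ℂ 4 _).symm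
    linarith [norm_add_le (P - P ^ 2) (Q - Q ^ 2)]

theorem circleInverseBound_pow_two_pow {b : B} {M C : ℝ} (h : CircleInverseBound b M C) (k : ℕ) :
    CircleInverseBound (b ^ 2 ^ k) M (C / 2 ^ k) := by
  induction k with
  | zero => simpa only [pow_zero, pow_one, div_one] using h
  | succ k ih =>
    simpa only [pow_succ 2 k, pow_mul, div_div, pow_succ (2 : ℝ) k] using circleInverseBound_sq ih

theorem isUnit_one_sub_of_circleInverseBound {b : B} {M C : ℝ} (h : CircleInverseBound b M C) :
    IsUnit (1 - b) := by
  simpa only [one_smul] using (h 1 norm_one).1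

theorem norm_inverse_sub_inverse_sq_le {b : B} {M C : ℝ} (h : CircleInverseBound b M C) :
    ‖(1 - b)⁻¹ʳ - (1 - b ^ 2)⁻¹ʳ‖ ≤ (‖(1 : B)‖ + 2 * M) * C := by
  obtain ⟨hunit, -, hC⟩ := h 1 norm_one
  obtain ⟨hunit', hM', -⟩ := h (-1) (by rw [norm_neg, norm_one])
  rw [one_smul] at hunit hC
  rw [neg_smul, one_smul, sub_neg_eq_add] at hunit' hM'
  have hP := Ring.mul_inverse_cancel _ hunit
  have hQ := Ring.mul_inverse_cancel _ hunit'
  have hfactor : 1 - b ^ 2 = (1 - b) * (1 + b) := by ring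
  rw [hfactor, Ring.mul_inverse_rev, mul_comm (1 + b)⁻¹ʳ, sub_mul_eq_mul_sub_sq_of_inverses hP hQ]
  have hnorm : ‖1 - 2 * (1 + b)⁻¹ʳ‖ ≤ ‖(1 : B)‖ + 2 * M := by
    calc ‖1 - 2 * (1 + b)⁻¹ʳ‖ ≤ ‖(1 : B)‖ + ‖(1 + b)⁻¹ʳ + (1 + b)⁻¹ʳ‖ := by
          rw [two_mul]
          exact norm_sub_le _ _
      _ ≤ ‖(1 : B)‖ + 2 * M := by linarith [norm_add_le (1 + b)⁻¹ʳ (1 + b)⁻¹ʳ]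
  exact (norm_mul_le _ _).trans
    (mul_le_mul hnorm hC (norm_nonneg _) ((norm_nonneg _).trans hnorm))

theorem exists_isIdempotentElem_tendsto_inverse_one_sub_pow [CompleteSpace B] {b : B} {M C : ℝ}
    (h : CircleInverseBound b M C) :
    ∃ p, IsIdempotentElem p ∧ Tendsto (fun k : ℕ => (1 - b ^ 2 ^ k)⁻¹ʳ) atTop (𝓝 p) := by
  have hbound (k : ℕ) := circleInverseBound_pow_two_pow h k
  have hcauchy : CauchySeq fun k : ℕ => (1 - b ^ 2 ^ k)⁻¹ʳ := by
    refine cauchySeq_of_le_geometric_two (C := 2 * ((‖(1 : B)‖ + 2 * M) * C)) fun k => ?_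
    rw [dist_eq_norm, pow_succ 2 k, pow_mul]
    refine (norm_inverse_sub_inverse_sq_le (hbound k)).trans_eq ?_
    field_simp
  obtain ⟨p, hp⟩ := cauchySeq_tendsto_of_complete hcauchy
  have herror : Tendsto (fun k : ℕ => (1 - b ^ 2 ^ k)⁻¹ʳ - (1 - b ^ 2 ^ k)⁻¹ʳ ^ 2) atTop (𝓝 0) := by
    refine squeeze_zero_norm (fun k => ?_) (tendsto_const_nhds.div_atTop
      (tendsto_pow_atTop_atTop_of_one_lt one_lt_two) : Tendsto (fun k : ℕ => C / 2 ^ k) _ _)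
    simpa only [one_smul] using (hbound k 1 norm_one).2.2
  have hpp : p - p ^ 2 = 0 := tendsto_nhds_unique (hp.sub (hp.pow 2)) herror
  exact ⟨p, by rw [IsIdempotentElem, ← sq, ← sub_eq_zero.1 hpp], hp⟩

end DyadicPowers

theorem spectrum_subset_ball_one_of_norm_pow_lt_one {𝕜 A : Type*} [NontriviallyNormedField 𝕜]
    [NormedRing A] [NormedAlgebra 𝕜 A] [CompleteSpace A] {b : A} {n : ℕ}
    (h : ‖b ^ n‖ * ‖(1 : A)‖ < 1) : spectrum 𝕜 b ⊆ ball 0 1 := by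
  intro z hz
  have hpow : ‖z‖ ^ n < 1 := by
    rw [← norm_pow]
    exact (spectrum.norm_le_norm_mul_of_mem (spectrum.pow_mem_pow b n hz)).trans_lt h
  exact mem_ball_zero_iff.2 (lt_of_pow_lt_pow_left₀ n zero_le_one (by rwa [one_pow]))

theorem isUnit_one_sub_smul_of_sphere_subset_resolventSet {A : Type*} [Ring A] [Algebra ℂ A]
    {a : A} (h : sphere (0 : ℂ) 1 ⊆ resolventSet ℂ a) {z : ℂ} (hz : ‖z‖ = 1) :
    IsUnit (1 - z • a) := by
  have hz0 : z ≠ 0 := norm_ne_zero_iff.1 (hz ▸ one_ne_zero)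
  have hinv : z⁻¹ ∈ resolventSet ℂ a :=
    h (mem_sphere_zero_iff_norm.2 (by rw [norm_inv, hz, inv_one]))
  rw [spectrum.mem_resolventSet_iff, Algebra.algebraMap_eq_smul_one] at hinv
  simpa only [Units.smul_def, Units.val_inv_eq_inv_val, Units.val_mk0, inv_inv] using
    (IsUnit.smul_sub_iff_sub_inv_smul (Units.mk0 z hz0)⁻¹ a).1 hinv

theorem exists_outerInverse_spectrum_subset_ball_one {B : Type*} [NormedCommRing B]
    [NormedAlgebra ℂ B] [CompleteSpace B] {a : B} (h : sphere (0 : ℂ) 1 ⊆ resolventSet ℂ a) :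
    ∃ x, x * a * x = x ∧ spectrum ℂ (a - a ^ 2 * x) ⊆ ball 0 1 := by
  obtain ⟨M, C, hbound⟩ :=
    exists_circleInverseBound fun _ => isUnit_one_sub_smul_of_sphere_subset_resolventSet h
  obtain ⟨p, hp, hlim⟩ := exists_isIdempotentElem_tendsto_inverse_one_sub_pow hbound
  have hunit (k : ℕ) : IsUnit (1 - a ^ 2 ^ k) :=
    isUnit_one_sub_of_circleInverseBound (circleInverseBound_pow_two_pow hbound k)
  have hcorner : IsUnit (a * (1 - p) + p) := by
    obtain ⟨k, hk⟩ := (eventually_isUnit_corner_of_tendsto_inverse_one_sub hp hunit hlim).exists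
    rwa [← corner_pow hp, isUnit_pow_iff (pow_ne_zero k two_ne_zero)] at hk
  obtain ⟨x, houter, hx⟩ := exists_outerInverse_of_isUnit_corner hp hcorner
  have hsmall : Tendsto (fun k : ℕ => ‖a ^ 2 ^ k * p‖ * ‖(1 : B)‖) atTop (𝓝 0) := by
    simpa only [norm_zero, zero_mul] using
      (tendsto_mul_zero_of_tendsto_inverse_one_sub hp hunit hlim).norm.mul_const ‖(1 : B)‖
  obtain ⟨k, hk⟩ := (hsmall.eventually_lt_const one_pos).exists
  refine ⟨x, houter, hx ▸ spectrum_subset_ball_one_of_norm_pow_lt_one (n := 2 ^ k) ?_⟩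
  rwa [mul_pow, hp.pow_eq (pow_ne_zero k two_ne_zero)]

theorem isUnit_of_isUnit_val_centralizer {K A : Type*} [CommSemiring K] [Semiring A] [Algebra K A]
    {S : Set A} {b : Subalgebra.centralizer K S} (h : IsUnit (b : A)) : IsUnit b := by
  obtain ⟨u, hu⟩ := h
  have hinv : (↑u⁻¹ : A) ∈ Subalgebra.centralizer K S :=
    (Subalgebra.mem_centralizer_iff K).2 fun s hs =>
      (show Commute s ↑u from hu ▸ (Subalgebra.mem_centralizer_iff K).1 b.2 s hs).units_inv_right
  exact ⟨⟨b, ⟨_, hinv⟩, Subtype.ext (by simp [← hu]), Subtype.ext (by simp [← hu])⟩, rfl⟩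

theorem exists_commute_outerInverse_spectrum_subset_ball_one {A : Type*} [NormedRing A]
    [NormedAlgebra ℂ A] [CompleteSpace A] {a : A} (h : sphere (0 : ℂ) 1 ⊆ resolventSet ℂ a) :
    ∃ x, Commute a x ∧ x * a * x = x ∧ spectrum ℂ (a - a ^ 2 * x) ⊆ ball 0 1 := by
  let B : Subalgebra ℂ A := Subalgebra.centralizer ℂ (Set.centralizer {a})
  have hcomm (x y : B) : x * y = y * x :=
    Subtype.ext <| Set.centralizer_centralizer_comm_of_comm (S := {a}) (by simp) _ x.2 _ y.2
  let : NormedCommRing B := { (inferInstance : NormedRing B) with mul_comm := hcomm }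
  have : CompleteSpace B := (Set.isClosed_centralizer _).completeSpace_coe
  let a' : B := ⟨a, Set.subset_centralizer_centralizer rfl⟩
  have h' : sphere (0 : ℂ) 1 ⊆ resolventSet ℂ a' := fun _ hz =>
    isUnit_of_isUnit_val_centralizer (h hz)
  obtain ⟨x, houter, hspec⟩ := exists_outerInverse_spectrum_subset_ball_one h'
  exact ⟨x, congrArg Subtype.val (hcomm a' x), congrArg Subtype.val houter,
    (AlgHom.spectrum_apply_subset B.val (a' - a' ^ 2 * x)).trans hspec⟩

theorem exists_commute_outerInverse_spectrum_subset_ball {A : Type*} [NormedRing A]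
    [NormedAlgebra ℂ A] [CompleteSpace A] {a : A} {r : ℝ} (hr : 0 < r)
    (h : sphere (0 : ℂ) r ⊆ resolventSet ℂ a) :
    ∃ x, Commute a x ∧ x * a * x = x ∧ spectrum ℂ (a - a ^ 2 * x) ⊆ ball 0 r := by
  let u : ℂˣ := Units.mk0 r (Complex.ofReal_ne_zero.2 hr.ne')
  have hu : ‖(u : ℂ)‖ = r := by rw [Units.val_mk0, Complex.norm_of_nonneg hr.le]
  obtain ⟨b, rfl⟩ : ∃ b, a = u • b := ⟨u⁻¹ • a, (smul_inv_smul u a).symm⟩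
  have hb : sphere (0 : ℂ) 1 ⊆ resolventSet ℂ b := fun z hz => by
    have hmem : u • z ∈ sphere (0 : ℂ) r := by
      rw [mem_sphere_zero_iff_norm] at hz ⊢
      rw [Units.smul_def, norm_smul, hu, hz, mul_one]
    exact spectrum.notMem_iff.1 (spectrum.smul_mem_smul_iff.not.1 (spectrum.notMem_iff.2 (h hmem)))
  obtain ⟨x, hcomm, houter, hspec⟩ := exists_commute_outerInverse_spectrum_subset_ball_one hb
  refine ⟨u⁻¹ • x, (hcomm.smul_left u).smul_right u⁻¹, ?_, ?_⟩
  · rw [smul_mul_smul_comm, inv_mul_cancel, one_smul, mul_smul_comm, houter]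
  · have hscale : u • b - (u • b) ^ 2 * u⁻¹ • x = u • (b - b ^ 2 * x) := by
      rw [smul_pow, smul_mul_smul_comm, sq u, mul_inv_cancel_right, smul_sub]
    rw [hscale, spectrum.unit_smul_eq_smul]
    rintro _ ⟨z, hz, rfl⟩
    have hz1 := mem_ball_zero_iff.1 (hspec hz)
    rw [mem_ball_zero_iff]
    simpa only [Units.smul_def, norm_smul, hu, mul_one] using mul_lt_mul_of_pos_left hz1 hr

theorem exists_commute_outerInverse_forall_mem_spectrum {A : Type*} [NormedRing A]
    [NormedAlgebra ℂ A] [CompleteSpace A] {a : A} {p : ℂ → Prop}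
    (h : 0 ∉ derivedSet (derivedSet (spectrum ℂ a))) (hp : ∀ᶠ z in 𝓝[≠] 0, p z) :
    ∃ x, Commute a x ∧ x * a * x = x ∧ ∀ z ∈ spectrum ℂ (a - a ^ 2 * x), z ≠ 0 → p z := by
  obtain ⟨r, hdisj, hball, hr⟩ :=
    ((frequently_disjoint_sphere_of_notMem_derivedSet_derivedSet h).and_eventually
      ((eventually_forall_mem_ball_of_eventually_nhdsNE hp).and self_mem_nhdsWithin)).exists
  obtain ⟨x, hcomm, houter, hspec⟩ :=
    exists_commute_outerInverse_spectrum_subset_ball hr fun z hz =>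
      spectrum.notMem_iff.1 (hdisj.notMem_of_mem_left hz)
  exact ⟨x, hcomm, houter, fun z hz => hball z (hspec hz)⟩

end RieszProjection

section DrazinInverse

variable {A : Type*} [NormedRing A] [NormedAlgebra ℂ A]

theorem not_isGDrazinInv_of_subsingleton [Subsingleton A] (a : A) : ¬ IsGDrazinInv a := by
  rintro ⟨x, -, -, hquasi⟩
  rw [IsQuasinilpotent, spectrum.of_subsingleton] at hquasi
  exact (singleton_ne_empty 0).symm hquasi

theorem not_isAgDrazinInv_of_subsingleton [Subsingleton A] (a : A) : ¬ IsAgDrazinInv a :=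
  fun ⟨_, _, _, hacc⟩ => not_isGDrazinInv_of_subsingleton _ (hacc 1 one_ne_zero)

theorem gDrazinSpectrum_of_subsingleton [Subsingleton A] (a : A) : gDrazinSpectrum a = univ :=
  eq_univ_of_forall fun _ => not_isGDrazinInv_of_subsingleton _

variable [CompleteSpace A] [Nontrivial A]

theorem isGDrazinInv_iff_zero_notMem_derivedSet_spectrum {a : A} :
    IsGDrazinInv a ↔ 0 ∉ derivedSet (spectrum ℂ a) := by
  constructor
  · rintro ⟨x, hcomm, houter, hquasi⟩
    rw [mem_derivedSet_congr (eventually_mem_spectrum_iff_mem_spectrum_sub_sq_mul hcomm houter),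
      hquasi, derivedSet_singleton]
    exact notMem_empty 0
  · intro h
    have hderived : derivedSet (spectrum ℂ a) ⊆ spectrum ℂ a :=
      (isClosed_iff_derivedSet_subset _).1 (spectrum.isClosed a)
    obtain ⟨x, hcomm, houter, hspec⟩ := exists_commute_outerInverse_forall_mem_spectrum
      (fun h' => h (derivedSet_mono _ _ hderived h')) (notMem_derivedSet_iff.1 h)
    refine ⟨x, hcomm, houter, (spectrum.nonempty _).subset_singleton_iff.1 fun z hz => ?_⟩
    by_contra hz0
    exact hspec z hz hz0
      ((spectrum_sub_sq_mul_subset_insert_zero hcomm houter hz).resolve_left hz0)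

theorem gDrazinSpectrum_eq_derivedSet_spectrum (a : A) :
    gDrazinSpectrum a = derivedSet (spectrum ℂ a) := by
  ext l
  have htranslate : spectrum ℂ (a - l • (1 : A)) = (· + l) ⁻¹' spectrum ℂ a := by
    ext z
    rw [mem_preimage, spectrum.add_mem_iff, neg_add_eq_sub, Algebra.algebraMap_eq_smul_one]
  rw [gDrazinSpectrum, mem_ofPred_eq, isGDrazinInv_iff_zero_notMem_derivedSet_spectrum, not_not,
    htranslate, mem_derivedSet, mem_derivedSet, accPt_iff_frequently_nhdsNE,
    accPt_iff_frequently_nhdsNE, ← zero_add l, ← map_add_right_nhdsNE, frequently_map]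
  simp only [mem_preimage, zero_add]

theorem memAcc_iff_derivedSet_spectrum_subset {b : A} :
    MemAcc b ↔ derivedSet (spectrum ℂ b) ⊆ {0} := by
  rw [← gDrazinSpectrum_eq_derivedSet_spectrum]
  exact forall_congr' fun l => not_imp_comm

theorem isAgDrazinInv_iff_zero_notMem_derivedSet_derivedSet_spectrum {a : A} :
    IsAgDrazinInv a ↔ 0 ∉ derivedSet (derivedSet (spectrum ℂ a)) := by
  constructor
  · rintro ⟨x, hcomm, houter, hacc⟩ h
    rw [mem_derivedSet_congr (eventually_mem_derivedSet_congr
      (eventually_mem_spectrum_iff_mem_spectrum_sub_sq_mul hcomm houter))] at h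
    have hzero := derivedSet_mono _ _ (memAcc_iff_derivedSet_spectrum_subset.1 hacc) h
    exact (derivedSet_singleton (0 : ℂ)).subset hzero
  · intro h
    obtain ⟨x, hcomm, houter, hspec⟩ :=
      exists_commute_outerInverse_forall_mem_spectrum h (notMem_derivedSet_iff.1 h)
    refine ⟨x, hcomm, houter, memAcc_iff_derivedSet_spectrum_subset.2 fun l hl => ?_⟩
    by_contra hl0
    have hlspec : l ∈ spectrum ℂ (a - a ^ 2 * x) :=
      (isClosed_iff_derivedSet_subset _).1 (spectrum.isClosed _) hl
    have hla : l ∈ derivedSet (spectrum ℂ a) := by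
      have hinsert := derivedSet_mono _ _ (spectrum_sub_sq_mul_subset_insert_zero hcomm houter) hl
      rwa [insert_eq, derivedSet_union, derivedSet_singleton, empty_union] at hinsert
    exact hspec l hlspec hl0 hla

end DrazinInverse

theorem agDrazin_iff_not_accPt_gDrazinSpectrum {A : Type*} [NormedRing A] [NormedAlgebra ℂ A]
    [CompleteSpace A] (a : A) :
    IsAgDrazinInv a ↔ ¬ AccPt (0 : ℂ) (𝓟 (gDrazinSpectrum a)) := by
  rcases subsingleton_or_nontrivial A with _ | _
  · have hacc : AccPt (0 : ℂ) (𝓟 (gDrazinSpectrum a)) := by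
      rw [gDrazinSpectrum_of_subsingleton, principal_univ, AccPt, inf_top_eq]
      infer_instance
    exact iff_of_false (not_isAgDrazinInv_of_subsingleton a) (not_not_intro hacc)
  · rw [isAgDrazinInv_iff_zero_notMem_derivedSet_derivedSet_spectrum,
      ← gDrazinSpectrum_eq_derivedSet_spectrum, mem_derivedSet]
end

section
/- Let A be a complex unital Banach algebra and a, b ∈ A. Then the ag-Drazin spectra satisfy σ_ad(ab) = σ_ad(ba). -/
open Filter Topology

/-!
Generalized Drazin and ag-Drazin invertibility of `a` both ask for a commuting outer inverse `x` of
`a` whose residue `a * (1 - a * x)` lies in a class `P`, the quasinilpotent elements or `MemAcc`.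
Suppose `P (a * b)` implies `P (b * a)`. For `λ = 0`, invertibility passes from `a * b` to `b * a`
by Cline's formula. For `λ ≠ 0`, after rescaling, it has to pass from `1 - a * b` to `1 - b * a`,
and an explicit inverse in the manner of Jacobson's lemma exists as soon as the residue `r` of
`1 - a * b` has `1 - r` invertible. This is automatic for quasinilpotent residues. For residues in
`MemAcc`, the element `1 - r` is only generalized Drazin invertible, but its spectral idempotent
lies in the double commutant, and moving the corresponding corner of `1 - a * b` into the invertible
part replaces `r` by a residue for which the condition holds. The argument is run twice: for
quasinilpotent residues it shows that `MemAcc` is invariant under swapping the factors of a product,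
and with this it applies to residues in `MemAcc`.
-/

section Ring

variable {R : Type*} [Ring R]

/-- The element whose Peirce components with respect to an idempotent `g` are `x` on the corner of
`g` and `y` on the corner of `1 - g`; it is meant for `x` and `y` commuting with `g`. -/
def peirceSum (g x y : R) : R :=
  g * x + (1 - g) * y

theorem peirceSum_self (g x : R) : peirceSum g x x = x := by
  rw [peirceSum, ← add_mul, add_sub_cancel, one_mul]

theorem peirceSum_sub_peirceSum (g x y x' y' : R) :
    peirceSum g x y - peirceSum g x' y' = peirceSum g (x - x') (y - y') := by
  simp only [peirceSum]
  noncomm_ring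

theorem peirceSum_mul_peirceSum {g x y : R} (hg : IsIdempotentElem g) (hx : Commute g x)
    (hy : Commute g y) (x' y' : R) :
    peirceSum g x y * peirceSum g x' y' = peirceSum g (x * x') (y * y') := by
  have hy' : Commute (1 - g) y := (Commute.one_left y).sub_left hy
  have corner {e z z' : R} (he : IsIdempotentElem e) (hz : Commute e z) :
      e * z * (e * z') = e * (z * z') := by
    rw [hz.eq, mul_assoc, ← mul_assoc e, he.eq, ← mul_assoc, ← hz.eq, mul_assoc]
  have cross {e f z z' : R} (hef : e * f = 0) (hz : Commute e z) : e * z * (f * z') = 0 := by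
    rw [hz.eq, mul_assoc, ← mul_assoc e, hef, zero_mul, mul_zero]
  simp only [peirceSum, add_mul, mul_add, corner hg hx, corner hg.one_sub hy',
    cross hg.mul_one_sub_self hx, cross hg.one_sub_mul_self hy', zero_add, add_zero]

theorem isUnit_peirceSum {g x y : R} (hg : IsIdempotentElem g) (hx : IsUnit x) (hy : IsUnit y)
    (hgx : Commute g x) (hgy : Commute g y) : IsUnit (peirceSum g x y) := by
  obtain ⟨u, rfl⟩ := hx
  obtain ⟨v, rfl⟩ := hy
  refine ⟨⟨peirceSum g u v, peirceSum g ↑u⁻¹ ↑v⁻¹, ?_, ?_⟩, rfl⟩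
  · rw [peirceSum_mul_peirceSum hg hgx hgy, u.mul_inv, v.mul_inv, peirceSum_self]
  · rw [peirceSum_mul_peirceSum hg hgx.units_inv_right hgy.units_inv_right, u.inv_mul, v.inv_mul,
      peirceSum_self]

theorem peirceSum_residue {g a a' : R} (hg : IsIdempotentElem g) (hga : Commute g a)
    (hga' : Commute g a') (x x' : R) :
    peirceSum g a a' * (1 - peirceSum g a a' * peirceSum g x x') =
      peirceSum g (a * (1 - a * x)) (a' * (1 - a' * x')) := by
  conv_lhs => rw [← peirceSum_self g 1]
  rw [peirceSum_mul_peirceSum hg hga hga', peirceSum_sub_peirceSum,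
    peirceSum_mul_peirceSum hg hga hga']

/-- `x` is an outer inverse of `a` that commutes with `a`. The associated idempotent
`1 - a * x` splits `a` into an invertible part and the residue `a * (1 - a * x)`. -/
structure IsCommOuterInverse (a x : R) : Prop where
  commute : Commute a x
  outer : x * a * x = x

theorem isCommOuterInverse_units_inv (u : Rˣ) : IsCommOuterInverse (u : R) ↑u⁻¹ where
  commute := (Commute.refl (u : R)).units_inv_right
  outer := by rw [u.inv_mul, one_mul]

namespace IsCommOuterInverse

variable {a x : R}

theorem mul_mul_self (h : IsCommOuterInverse a x) : a * x * x = x := by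
  rw [h.commute.eq, h.outer]

theorem isIdempotentElem_mul (h : IsCommOuterInverse a x) : IsIdempotentElem (a * x) := by
  rw [IsIdempotentElem, mul_assoc, ← mul_assoc x, h.outer]

theorem isIdempotentElem_one_sub_mul (h : IsCommOuterInverse a x) :
    IsIdempotentElem (1 - a * x) :=
  h.isIdempotentElem_mul.one_sub

theorem mul_one_sub_mul (h : IsCommOuterInverse a x) : x * (1 - a * x) = 0 := by
  rw [mul_sub, mul_one, ← mul_assoc, h.outer, sub_self]

theorem commute_one_sub_mul (h : IsCommOuterInverse a x) : Commute a (1 - a * x) :=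
  (Commute.one_right a).sub_right ((Commute.refl a).mul_right h.commute)

theorem one_sub_mul_commute (h : IsCommOuterInverse a x) : Commute (1 - a * x) x :=
  (Commute.one_left x).sub_left (h.commute.mul_left (Commute.refl x))

theorem commute_of_commute_mul (h : IsCommOuterInverse a x) {u : R} (hua : Commute u a)
    (hue : Commute u (a * x)) : Commute u x :=
  calc u * x = u * (a * x) * x := by rw [mul_assoc, h.mul_mul_self]
    _ = x * (a * u) * x := by rw [hue.eq, h.commute.eq, mul_assoc x]
    _ = x * (u * (a * x)) := by rw [← hua.eq]; simp only [mul_assoc]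
    _ = x * u := by rw [hue.eq, ← mul_assoc, ← mul_assoc, h.outer]

theorem smul {K : Type*} [Field K] [Algebra K R] {t : K} (ht : t ≠ 0)
    (h : IsCommOuterInverse a x) : IsCommOuterInverse (t • a) (t⁻¹ • x) where
  commute := (h.commute.smul_left t).smul_right t⁻¹
  outer := by
    rw [smul_mul_smul_comm, smul_mul_smul_comm, h.outer, inv_mul_cancel₀ ht, one_mul]

theorem isUnit_peirceSum_one (h : IsCommOuterInverse a x) :
    IsUnit (peirceSum (1 - a * x) 1 a) := by
  have hp := h.isIdempotentElem_one_sub_mul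
  have self_eq_one : peirceSum (1 - a * x) 1 (a * x) = 1 := by
    rw [peirceSum, sub_sub_cancel, h.isIdempotentElem_mul.eq, mul_one, sub_add_cancel]
  refine ⟨⟨peirceSum (1 - a * x) 1 a, peirceSum (1 - a * x) 1 x, ?_, ?_⟩, rfl⟩
  · rw [peirceSum_mul_peirceSum hp (Commute.one_right _) h.commute_one_sub_mul.symm, one_mul,
      self_eq_one]
  · rw [peirceSum_mul_peirceSum hp (Commute.one_right _) h.one_sub_mul_commute, one_mul,
      ← h.commute.eq, self_eq_one]

theorem peirceSum_peirceSum {a' x' g : R} (h : IsCommOuterInverse a x)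
    (h' : IsCommOuterInverse a' x') (hg : IsIdempotentElem g) (hga : Commute g a)
    (hgx : Commute g x) (hga' : Commute g a') (hgx' : Commute g x') :
    IsCommOuterInverse (peirceSum g a a') (peirceSum g x x') where
  commute := by
    rw [commute_iff_eq, peirceSum_mul_peirceSum hg hga hga', peirceSum_mul_peirceSum hg hgx hgx',
      h.commute.eq, h'.commute.eq]
  outer := by
    rw [peirceSum_mul_peirceSum hg hgx hgx',
      peirceSum_mul_peirceSum hg (hgx.mul_right hga) (hgx'.mul_right hga'), h.outer, h'.outer]

variable {u : Rˣ}

theorem commute_units_inv (h : IsCommOuterInverse a x) (hu : (u : R) = 1 - a * (1 - a * x)) :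
    Commute a ↑u⁻¹ :=
  Commute.units_inv_right (hu ▸ (Commute.one_right a).sub_right
    ((Commute.refl a).mul_right h.commute_one_sub_mul))

theorem one_sub_mul_mul_units_inv (h : IsCommOuterInverse a x)
    (hu : (u : R) = 1 - a * (1 - a * x)) :
    (1 - a) * ((1 - a * x) * ↑u⁻¹) = 1 - a * x := by
  have mul_unit : (1 - a) * (1 - a * x) = (1 - a * x) * u := by
    rw [hu, mul_sub (1 - a * x), mul_one, ← mul_assoc, ← h.commute_one_sub_mul.eq, mul_assoc,
      h.isIdempotentElem_one_sub_mul.eq, sub_mul 1 a (1 - a * x), one_mul]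
  rw [← mul_assoc, mul_unit, u.mul_inv_cancel_right]

theorem one_sub_mul_sub_mul_units_inv (h : IsCommOuterInverse a x)
    (hu : (u : R) = 1 - a * (1 - a * x)) :
    1 - a * (x - (1 - a * x) * ↑u⁻¹) = (1 - a * x) * ↑u⁻¹ := by
  linear_combination (norm := noncomm_ring) -h.one_sub_mul_mul_units_inv hu

theorem exists_residue_eq_one_sub_mul {r : R} (h : IsCommOuterInverse a x)
    (hr : IsIdempotentElem r) (hra : Commute r a) (hrx : Commute r x)
    (hunit : IsUnit (1 - (1 - a * (1 - a * x)) * r)) :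
    ∃ x', IsCommOuterInverse a x' ∧ a * (1 - a * x') = (1 - r) * (a * (1 - a * x)) := by
  -- With `p = 1 - a * x`, the element `a` agrees with the given unit `v` on the corner of `p * r`,
  -- so that corner can be added to the invertible part of `a`.
  obtain ⟨v, hv⟩ := hunit
  have hp := h.isIdempotentElem_one_sub_mul
  have hap := h.commute_one_sub_mul
  have hpx := h.one_sub_mul_commute
  have hrp : Commute r (1 - a * x) := (Commute.one_right r).sub_right (hra.mul_right hrx)
  generalize hp_def : 1 - a * x = p at *
  have hg : IsIdempotentElem (p * r) := hp.mul_of_commute hrp.symm hr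
  have hga : Commute (p * r) a := hap.symm.mul_left hra
  have hgx : Commute (p * r) x := hpx.mul_left hrx
  have hgv : Commute (p * r) v := hv ▸ (Commute.one_right _).sub_right
    (((Commute.one_right _).sub_right (hga.mul_right ((Commute.refl p).mul_left hrp))).mul_right
      (hrp.symm.mul_left (Commute.refl r)))
  have mul_unit : p * r * v = p * r * a :=
    calc p * r * v = p * (r - r * (1 - a * p) * r) := by rw [hv]; noncomm_ring
      _ = p * (a * (p * r)) := by
        rw [((Commute.one_right r).sub_right (hra.mul_right hrp)).eq, mul_assoc, hr.eq]
        noncomm_ring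
      _ = p * r * a := by rw [← hga.eq, ← mul_assoc, ← mul_assoc, hp.eq]
  have a_eq : peirceSum (p * r) v a = a := by
    rw [peirceSum, mul_unit, ← peirceSum, peirceSum_self]
  refine ⟨peirceSum (p * r) ↑v⁻¹ x, ?_, ?_⟩
  · simpa only [a_eq] using (isCommOuterInverse_units_inv v).peirceSum_peirceSum h hg hgv
      hgv.units_inv_right hga hgx
  · have residue_eq := peirceSum_residue hg hgv hga ↑v⁻¹ x
    rw [a_eq, v.mul_inv, sub_self, mul_zero, hp_def] at residue_eq
    rw [residue_eq, peirceSum, mul_zero, zero_add, sub_mul, sub_mul, hap.eq, ← hrp.eq, mul_assoc r,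
      ← mul_assoc p p, hp.eq]

end IsCommOuterInverse

/-- Drazin invertibility relative to a class `P` of residues: `a` has a commuting outer inverse `x`
with `a * (1 - a * x)` in `P`. Nilpotent, quasinilpotent and `MemAcc` residues give the Drazin, the
generalized Drazin and the ag-Drazin invertible elements. -/
def IsDrazinInvMod (P : R → Prop) (a : R) : Prop :=
  ∃ x, IsCommOuterInverse a x ∧ P (a * (1 - a * x))

theorem isDrazinInvMod_iff_exists_sub_sq_mul {P : R → Prop} {a : R} :
    IsDrazinInvMod P a ↔ ∃ x, a * x = x * a ∧ x * a * x = x ∧ P (a - a ^ 2 * x) := by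
  have residue_eq (x : R) : a * (1 - a * x) = a - a ^ 2 * x := by noncomm_ring
  simp only [IsDrazinInvMod, residue_eq]
  exact exists_congr fun x => ⟨fun ⟨h, hP⟩ => ⟨h.commute, h.outer, hP⟩,
    fun ⟨hcomm, houter, hP⟩ => ⟨⟨hcomm, houter⟩, hP⟩⟩

theorem isDrazinInvMod_smul_iff {K : Type*} [Field K] [Algebra K R] {P : R → Prop}
    (hP : ∀ {t : K} {c : R}, t ≠ 0 → P c → P (t • c)) {t : K} (ht : t ≠ 0) {a : R} :
    IsDrazinInvMod P (t • a) ↔ IsDrazinInvMod P a := by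
  have smul {s : K} (hs : s ≠ 0) {c : R} : IsDrazinInvMod P c → IsDrazinInvMod P (s • c) := by
    rintro ⟨x, hx, hPx⟩
    refine ⟨s⁻¹ • x, hx.smul hs, ?_⟩
    rw [smul_mul_smul_comm, mul_inv_cancel₀ hs, one_smul, smul_mul_assoc]
    exact hP hs hPx
  refine ⟨fun h => ?_, smul ht⟩
  simpa only [inv_smul_smul₀ ht] using smul (inv_ne_zero ht) h

theorem IsDrazinInvMod.mul_swap {P : R → Prop} (hP : ∀ {a b : R}, P (a * b) → P (b * a)) {a b : R}
    (h : IsDrazinInvMod P (a * b)) : IsDrazinInvMod P (b * a) := by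
  obtain ⟨x, hx, hPx⟩ := h
  have left : b * a * (b * x ^ 2 * a) = b * x * a := by
    calc b * a * (b * x ^ 2 * a) = b * (a * b * x * x) * a := by noncomm_ring
      _ = b * x * a := by rw [hx.mul_mul_self]
  have right : b * x ^ 2 * a * (b * a) = b * x * a := by
    calc b * x ^ 2 * a * (b * a) = b * (x * (x * (a * b))) * a := by noncomm_ring
      _ = b * x * a := by rw [← hx.commute.eq, ← mul_assoc x, hx.outer]
  refine ⟨b * x ^ 2 * a, ⟨left.trans right.symm, ?_⟩, ?_⟩
  · calc b * x ^ 2 * a * (b * a) * (b * x ^ 2 * a) = b * (x * (a * b) * x) * x * a := by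
          rw [right]; noncomm_ring
      _ = b * x ^ 2 * a := by rw [hx.outer]; noncomm_ring
  · have residue_eq : b * a * (1 - b * a * (b * x ^ 2 * a)) = b * (a * (1 - b * x * a)) := by
      rw [left, mul_assoc]
    have swapped_eq : a * (1 - b * x * a) * b = a * b * (1 - a * b * x) := by
      rw [hx.commute.eq]; noncomm_ring
    rw [residue_eq]
    exact hP (swapped_eq ▸ hPx)

theorem one_sub_mul_one_add_mul_mul (a b t : R) :
    (1 - b * a) * (1 + b * t * a) = 1 - b * (1 - (1 - a * b) * t) * a := by
  noncomm_ring

theorem isCommOuterInverse_one_add_mul_mul {a b t : R} (ht : Commute (1 - a * b) t)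
    (h : (1 - (1 - a * b) * t + t) * (1 - (1 - a * b) * t) = 0) :
    IsCommOuterInverse (1 - b * a) (1 + b * t * a) := by
  have right := one_sub_mul_one_add_mul_mul a b t
  have left : (1 + b * t * a) * (1 - b * a) = 1 - b * (1 - (1 - a * b) * t) * a := by
    rw [ht.eq]; noncomm_ring
  have annihilate : (1 + b * t * a) * (b * (1 - (1 - a * b) * t) * a) = 0 := by
    calc (1 + b * t * a) * (b * (1 - (1 - a * b) * t) * a)
        = b * ((1 - t * (1 - a * b) + t) * (1 - (1 - a * b) * t)) * a := by noncomm_ring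
      _ = 0 := by rw [← ht.eq, h, mul_zero, zero_mul]
  refine ⟨right.trans left.symm, ?_⟩
  rw [mul_assoc, right, mul_sub, mul_one, annihilate, sub_zero]

theorem isDrazinInvMod_one_sub_mul_swap {P : R → Prop} (hP : ∀ {a b : R}, P (a * b) → P (b * a))
    {a b x : R} (hx : IsCommOuterInverse (1 - a * b) x)
    (hPx : P ((1 - a * b) * (1 - (1 - a * b) * x)))
    (hunit : IsUnit (1 - (1 - a * b) * (1 - (1 - a * b) * x))) :
    IsDrazinInvMod P (1 - b * a) := by
  -- With `α = 1 - a * b`, `p = 1 - α * x` and `s = (1 - α * p)⁻¹`, the inverse of `1 - b * a` is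
  -- `1 + b * t * a` for `t = x - p * s`, chosen so that `1 - α * t = p * s`.
  obtain ⟨u, hu⟩ := hunit
  have hαps : Commute (1 - a * b) ((1 - (1 - a * b) * x) * ↑u⁻¹) :=
    hx.commute_one_sub_mul.mul_right (hx.commute_units_inv hu)
  have hone_sub := hx.one_sub_mul_sub_mul_units_inv hu
  refine ⟨1 + b * (x - (1 - (1 - a * b) * x) * ↑u⁻¹) * a,
    isCommOuterInverse_one_add_mul_mul (hx.commute.sub_right hαps) ?_, ?_⟩
  · rw [hone_sub, add_sub_cancel, ← mul_assoc, hx.mul_one_sub_mul, zero_mul]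
  · have residue_eq (w : R) :
        (1 - b * a) * (1 - (1 - b * w * a)) = b * ((1 - a * b) * w * a) := by
      noncomm_ring
    rw [one_sub_mul_one_add_mul_mul, hone_sub, residue_eq]
    apply hP
    have swapped_eq : (1 - a * b) * ((1 - (1 - a * b) * x) * ↑u⁻¹) * a * b =
        (1 - a * b) * (1 - (1 - a * b) * x) :=
      calc _ = (1 - a * b) * ((1 - (1 - a * b) * x) * ↑u⁻¹ * (1 - (1 - a * b))) := by
            rw [sub_sub_cancel]; simp only [mul_assoc]
        _ = (1 - a * b) * (1 - (1 - a * b) * x) := by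
          rw [((Commute.one_left _).sub_left hαps).symm.eq, hx.one_sub_mul_mul_units_inv hu]
    rwa [swapped_eq]

end Ring

theorem pow_mul_mul_pow_eq_self {M : Type*} [Monoid M] {z h s : M} (hzs : z * h * s = h) (n : ℕ) :
    z ^ n * h * s ^ n = h := by
  induction n with
  | zero => simp only [pow_zero, one_mul, mul_one]
  | succ n ih =>
    calc z ^ (n + 1) * h * s ^ (n + 1) = z ^ n * (z * h * s) * s ^ n := by
          rw [pow_succ, pow_succ']; simp only [mul_assoc]
      _ = h := by rw [hzs, ih]

theorem eq_zero_of_mul_mul_eq_self {A : Type*} [NormedRing A] {z h s : A} (hzs : z * h * s = h)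
    (hlim : Tendsto (fun n : ℕ => ‖z ^ n‖ * ‖s ^ n‖) atTop (𝓝 0)) : h = 0 := by
  have bound (n : ℕ) : ‖h‖ ≤ ‖z ^ n‖ * ‖s ^ n‖ * ‖h‖ :=
    calc ‖h‖ = ‖z ^ n * h * s ^ n‖ := by rw [pow_mul_mul_pow_eq_self hzs]
      _ ≤ ‖z ^ n‖ * ‖h‖ * ‖s ^ n‖ := norm_mul₃_le
      _ = ‖z ^ n‖ * ‖s ^ n‖ * ‖h‖ := mul_right_comm _ _ _
  have hlim' : Tendsto (fun n : ℕ => ‖z ^ n‖ * ‖s ^ n‖ * ‖h‖) atTop (𝓝 0) := by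
    simpa only [zero_mul] using hlim.mul_const ‖h‖
  exact norm_le_zero_iff.1 (ge_of_tendsto' hlim' bound)

section BanachAlgebra

variable {A : Type*} [NormedRing A] [NormedAlgebra ℂ A]

namespace IsQuasinilpotent

variable {z : A}

theorem nontrivial (hz : IsQuasinilpotent z) : Nontrivial A := by
  by_contra htriv
  have := not_nontrivial_iff_subsingleton.1 htriv
  exact Set.singleton_ne_empty 0 (hz.symm.trans (spectrum.of_subsingleton z))

theorem isUnit_one_sub (hz : IsQuasinilpotent z) : IsUnit (1 - z) := by
  have one_notMem : (1 : ℂ) ∉ spectrum ℂ z := hz ▸ one_ne_zero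
  rwa [spectrum.notMem_iff, map_one] at one_notMem

theorem smul (hz : IsQuasinilpotent z) (t : ℂ) : IsQuasinilpotent (t • z) := by
  have := hz.nontrivial
  rw [IsQuasinilpotent, spectrum.smul_eq_smul t z (hz ▸ Set.singleton_nonempty 0), hz,
    Set.smul_set_singleton, smul_zero]

end IsQuasinilpotent

theorem isAgDrazinInv_iff_isDrazinInvMod {a : A} : IsAgDrazinInv a ↔ IsDrazinInvMod MemAcc a :=
  isDrazinInvMod_iff_exists_sub_sq_mul.symm

theorem memAcc_iff_forall_isDrazinInvMod {a : A} :
    MemAcc a ↔ ∀ l : ℂ, l ≠ 0 → IsDrazinInvMod IsQuasinilpotent (a - l • (1 : A)) :=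
  forall₂_congr fun _ _ => isDrazinInvMod_iff_exists_sub_sq_mul.symm

variable [CompleteSpace A]

theorem isQuasinilpotent_of_spectrum_diff_eq_empty [Nontrivial A] {z : A}
    (hz : spectrum ℂ z \ {0} = ∅) : IsQuasinilpotent z :=
  (spectrum.nonempty z).subset_singleton_iff.1 (Set.sdiff_eq_empty.1 hz)

namespace IsQuasinilpotent

theorem mul_swap {a b : A} (h : IsQuasinilpotent (a * b)) : IsQuasinilpotent (b * a) := by
  have := h.nontrivial
  apply isQuasinilpotent_of_spectrum_diff_eq_empty
  rw [← spectrum.nonzero_mul_comm, h, Set.sdiff_self]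

theorem idempotent_mul {g z : A} (hz : IsQuasinilpotent z) (hg : IsIdempotentElem g)
    (hgz : Commute g z) : IsQuasinilpotent (g * z) := by
  have := hz.nontrivial
  refine isQuasinilpotent_of_spectrum_diff_eq_empty
    (Set.eq_empty_of_forall_notMem fun l ⟨hl, hl0⟩ => hl ?_)
  have sub_eq : algebraMap ℂ A l - g * z =
      peirceSum g (algebraMap ℂ A l - z) (algebraMap ℂ A l) := by
    rw [peirceSum]; noncomm_ring
  have hgl : Commute g (algebraMap ℂ A l) := (Algebra.commutes l g).symm
  rw [spectrum.mem_resolventSet_iff, sub_eq]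
  exact isUnit_peirceSum hg (spectrum.notMem_iff.1 (hz ▸ hl0)) ((IsUnit.mk0 l hl0).map _)
    (hgl.sub_right hgz) hgl

end IsQuasinilpotent

open scoped NNReal in
theorem eventually_nnnorm_pow_lt_pow_of_spectralRadius_lt {z : A} {r : ℝ≥0}
    (hr : spectralRadius ℂ z < r) : ∀ᶠ n : ℕ in atTop, ‖z ^ n‖₊ < r ^ n := by
  have gelfand := spectrum.pow_nnnorm_pow_one_div_tendsto_nhds_spectralRadius z
  filter_upwards [gelfand.eventually_lt_const hr, eventually_gt_atTop 0] with n hn hpos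
  rw [one_div, ENNReal.rpow_inv_lt_iff (Nat.cast_pos.2 hpos), ENNReal.rpow_natCast] at hn
  exact_mod_cast hn

theorem IsQuasinilpotent.tendsto_norm_pow_mul_norm_pow {z : A} (hz : IsQuasinilpotent z) (s : A) :
    Tendsto (fun n : ℕ => ‖z ^ n‖ * ‖s ^ n‖) atTop (𝓝 0) := by
  have radius_lt : spectralRadius ℂ z < ((2 * (‖s‖₊ + 1))⁻¹ : NNReal) := by
    have radius_eq : spectralRadius ℂ z = 0 := by
      rw [spectralRadius, hz, iSup_singleton, nnnorm_zero, ENNReal.coe_zero]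
    rw [radius_eq]
    exact_mod_cast (by positivity : 0 < (2 * (‖s‖₊ + 1))⁻¹)
  have mul_le_half : (2 * (‖s‖ + 1))⁻¹ * ‖s‖ ≤ 1 / 2 := by
    rw [inv_mul_le_iff₀ (by positivity)]
    linarith
  refine squeeze_zero' (Eventually.of_forall fun n => by positivity) ?_
    (tendsto_pow_atTop_nhds_zero_of_lt_one (by norm_num) (by norm_num : (1 / 2 : ℝ) < 1))
  filter_upwards [eventually_nnnorm_pow_lt_pow_of_spectralRadius_lt radius_lt,
    eventually_gt_atTop 0] with n hn hpos
  calc ‖z ^ n‖ * ‖s ^ n‖ ≤ (2 * (‖s‖ + 1))⁻¹ ^ n * ‖s‖ ^ n := by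
        gcongr
        · exact_mod_cast hn.le
        · exact norm_pow_le' s hpos
    _ = ((2 * (‖s‖ + 1))⁻¹ * ‖s‖) ^ n := (mul_pow _ _ _).symm
    _ ≤ (1 / 2) ^ n := by gcongr

theorem IsCommOuterInverse.commute_of_isQuasinilpotent {a x u : A} (hx : IsCommOuterInverse a x)
    (hq : IsQuasinilpotent (a * (1 - a * x))) (hua : Commute u a) : Commute u x := by
  -- With `e = a * x`, both off-diagonal parts `(1 - e) * u * e` and `e * u * (1 - e)` are fixed by
  -- multiplication with the quasinilpotent residue on one side and with `x` on the other.
  have hap := hx.commute_one_sub_mul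
  have hp := hx.isIdempotentElem_one_sub_mul
  have lower_eq_zero : (1 - a * x) * u * (a * x) = 0 := by
    refine eq_zero_of_mul_mul_eq_self (s := x) ?_ (hq.tendsto_norm_pow_mul_norm_pow x)
    calc a * (1 - a * x) * ((1 - a * x) * u * (a * x)) * x
        = a * ((1 - a * x) * (1 - a * x)) * u * (a * x * x) := by simp only [mul_assoc]
      _ = (1 - a * x) * (a * u) * x := by rw [hp.eq, hap.eq, hx.mul_mul_self, mul_assoc _ a u]
      _ = (1 - a * x) * u * (a * x) := by rw [← hua.eq]; simp only [mul_assoc]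
  have upper_eq_zero : a * x * u * (1 - a * x) = 0 := by
    refine eq_zero_of_mul_mul_eq_self (z := x) (s := a * (1 - a * x)) ?_ ?_
    · calc x * (a * x * u * (1 - a * x)) * (a * (1 - a * x))
          = x * a * x * u * ((1 - a * x) * a * (1 - a * x)) := by simp only [mul_assoc]
        _ = x * (u * a) * (1 - a * x) := by
          rw [hx.outer, ← hap.eq, mul_assoc a, hp.eq]; simp only [mul_assoc]
        _ = a * x * u * (1 - a * x) := by rw [hua.eq, hx.commute.eq]; simp only [mul_assoc]
    · simpa only [mul_comm] using hq.tendsto_norm_pow_mul_norm_pow x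
  refine hx.commute_of_commute_mul hua ?_
  rw [commute_iff_eq]
  linear_combination (norm := noncomm_ring) lower_eq_zero - upper_eq_zero

/-- Closure properties of a class `P` of residues under which `IsDrazinInvMod P` does not
distinguish `a * b - l • 1` from `b * a - l • 1`. They hold for the quasinilpotent elements and
for `MemAcc`. -/
structure IsDrazinClass (P : A → Prop) : Prop where
  mul_swap {a b : A} : P (a * b) → P (b * a)
  smul {t : ℂ} {c : A} : t ≠ 0 → P c → P (t • c)
  idempotent_mul {g c : A} : P c → IsIdempotentElem g → Commute g c → P (g * c)
  one_sub {c : A} : P c → IsDrazinInvMod IsQuasinilpotent (1 - c)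

namespace IsDrazinClass

variable {P : A → Prop} {a b : A}

theorem exists_isUnit_one_sub (hP : IsDrazinClass P) (h : IsDrazinInvMod P a) :
    ∃ x, IsCommOuterInverse a x ∧ P (a * (1 - a * x)) ∧ IsUnit (1 - a * (1 - a * x)) := by
  obtain ⟨x, hx, hPx⟩ := h
  obtain ⟨s, hs, hq⟩ := hP.one_sub hPx
  have commute_one_sub {u : A} (hua : Commute u a) (hux : Commute u x) :
      Commute u (1 - a * (1 - a * x)) :=
    (Commute.one_right u).sub_right (hua.mul_right
      ((Commute.one_right u).sub_right (hua.mul_right hux)))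
  have commute_idempotent {u : A} (hua : Commute u a) (hux : Commute u x) :
      Commute (1 - (1 - a * (1 - a * x)) * s) u :=
    have hus := hs.commute_of_isQuasinilpotent hq (commute_one_sub hua hux)
    ((Commute.one_right u).sub_right ((commute_one_sub hua hux).mul_right hus)).symm
  have hra := commute_idempotent (Commute.refl a) hx.commute
  have hrx := commute_idempotent hx.commute.symm (Commute.refl x)
  have hr := hs.isIdempotentElem_one_sub_mul
  obtain ⟨x', hx', residue_eq⟩ :=
    hx.exists_residue_eq_one_sub_mul hr hra hrx hq.isUnit_one_sub
  refine ⟨x', hx', ?_, ?_⟩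
  · rw [residue_eq]
    refine hP.idempotent_mul hPx hr.one_sub ((Commute.one_left _).sub_left ?_)
    exact hra.mul_right ((Commute.one_right _).sub_right (hra.mul_right hrx))
  · have one_sub_eq (r c : A) : 1 - (1 - r) * c = peirceSum r 1 (1 - c) := by
      rw [peirceSum]; noncomm_ring
    rw [residue_eq, one_sub_eq]
    exact hs.isUnit_peirceSum_one

theorem isDrazinInvMod_one_sub_mul_swap (hP : IsDrazinClass P)
    (h : IsDrazinInvMod P (1 - a * b)) : IsDrazinInvMod P (1 - b * a) := by
  obtain ⟨x, hx, hPx, hunit⟩ := hP.exists_isUnit_one_sub h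
  exact _root_.isDrazinInvMod_one_sub_mul_swap hP.mul_swap hx hPx hunit

theorem isDrazinInvMod_mul_sub_smul_one_swap (hP : IsDrazinClass P) {l : ℂ}
    (h : IsDrazinInvMod P (a * b - l • (1 : A))) : IsDrazinInvMod P (b * a - l • (1 : A)) := by
  rcases eq_or_ne l 0 with rfl | hl
  · simp only [zero_smul, sub_zero] at h ⊢
    exact h.mul_swap hP.mul_swap
  · have sub_eq (c : A) : c - l • (1 : A) = (-l) • (1 - l⁻¹ • c) := by
      rw [smul_sub, smul_smul, neg_mul, mul_inv_cancel₀ hl]; module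
    rw [sub_eq, isDrazinInvMod_smul_iff hP.smul (neg_ne_zero.2 hl)] at h ⊢
    rw [← smul_mul_assoc] at h
    rw [← mul_smul_comm]
    exact hP.isDrazinInvMod_one_sub_mul_swap h

end IsDrazinClass

theorem isDrazinClass_isQuasinilpotent : IsDrazinClass (IsQuasinilpotent : A → Prop) where
  mul_swap h := h.mul_swap
  smul _ h := h.smul _
  idempotent_mul h hg hgc := h.idempotent_mul hg hgc
  one_sub {c} h := by
    have := h.nontrivial
    obtain ⟨u, hu⟩ := h.isUnit_one_sub
    refine ⟨↑u⁻¹, hu ▸ isCommOuterInverse_units_inv u, ?_⟩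
    rw [← hu, u.mul_inv, sub_self, mul_zero]
    exact spectrum.zero_eq

theorem IsDrazinInvMod.peirceSum_smul_one {d g : A} {l : ℂ}
    (h : IsDrazinInvMod IsQuasinilpotent d) (hg : IsIdempotentElem g) (hgd : Commute g d)
    (hl : l ≠ 0) : IsDrazinInvMod IsQuasinilpotent (peirceSum g d (l • (1 : A))) := by
  obtain ⟨x, hx, hq⟩ := h
  have hgx := hx.commute_of_isQuasinilpotent hq hgd
  have hgl (t : ℂ) : Commute g (t • (1 : A)) := (Commute.one_right g).smul_right t
  have hl_inv : l • (1 : A) * l⁻¹ • (1 : A) = 1 := by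
    rw [smul_mul_smul_comm, mul_inv_cancel₀ hl, one_mul, one_smul]
  have hscalar : IsCommOuterInverse (l • (1 : A)) (l⁻¹ • (1 : A)) :=
    ⟨((Commute.one_right _).smul_right _), by rw [mul_assoc, hl_inv, mul_one]⟩
  refine ⟨_, hx.peirceSum_peirceSum hscalar hg hgd hgx (hgl l) (hgl l⁻¹), ?_⟩
  rw [peirceSum_residue hg hgd (hgl l), hl_inv, sub_self, mul_zero, peirceSum, mul_zero, add_zero]
  exact hq.idempotent_mul hg
    (hgd.mul_right ((Commute.one_right g).sub_right (hgd.mul_right hgx)))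

theorem isDrazinClass_memAcc : IsDrazinClass (MemAcc : A → Prop) := by
  have hQ := isDrazinClass_isQuasinilpotent (A := A)
  constructor <;> simp only [memAcc_iff_forall_isDrazinInvMod]
  case mul_swap => exact fun h l hl => hQ.isDrazinInvMod_mul_sub_smul_one_swap (h l hl)
  case smul =>
    intro t c ht h l hl
    have sub_eq : t • c - l • (1 : A) = t • (c - (t⁻¹ * l) • (1 : A)) := by
      rw [smul_sub, smul_smul, mul_inv_cancel_left₀ ht]
    rw [sub_eq, isDrazinInvMod_smul_iff hQ.smul ht]
    exact h _ (mul_ne_zero (inv_ne_zero ht) hl)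
  case idempotent_mul =>
    intro g c h hg hgc l hl
    have sub_eq : g * c - l • (1 : A) = peirceSum g (c - l • (1 : A)) ((-l) • (1 : A)) := by
      rw [peirceSum, mul_sub, mul_smul_comm, mul_smul_comm, mul_one, mul_one]; module
    rw [sub_eq]
    exact (h l hl).peirceSum_smul_one hg
      (hgc.sub_right ((Commute.one_right g).smul_right l)) (neg_ne_zero.2 hl)
  case one_sub =>
    intro c h
    have one_sub_eq : 1 - c = (-1 : ℂ) • (c - (1 : ℂ) • (1 : A)) := by module
    rw [one_sub_eq, isDrazinInvMod_smul_iff hQ.smul (neg_ne_zero.2 one_ne_zero)]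
    exact h 1 one_ne_zero

end BanachAlgebra

theorem agDrazinSpectrum_mul_comm {A : Type*} [NormedRing A] [NormedAlgebra ℂ A]
    [CompleteSpace A] (a b : A) :
    agDrazinSpectrum (a * b) = agDrazinSpectrum (b * a) := by
  ext l
  simp only [agDrazinSpectrum, isAgDrazinInv_iff_isDrazinInvMod]
  have hP := isDrazinClass_memAcc (A := A)
  exact not_congr ⟨hP.isDrazinInvMod_mul_sub_smul_one_swap,
    hP.isDrazinInvMod_mul_sub_smul_one_swap⟩
end

section
/- Let A be a complex unital Banach algebra and a ∈ A. Then a is ag-Drazin invertible if and only if a admits a decomposition a = x + y with xy = 0 = yx, x group invertible, and y ∈ A^acc. -/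
open Filter Topology

/-!
Both directions use one and the same element. If `z` commutes with `a` and `z * a * z = z`, then
`p = a * z` is an idempotent commuting with `a`, and `a = a * p + a * (1 - p)` splits `a` into
the part `a * p = a ^ 2 * z`, which has group inverse `z`, and a part annihilated by it.
Conversely, if `z` is the group inverse of `x` and `y` annihilates `x`, then `y` annihilates
`z = x * z * z` too, so `z` is a commuting outer inverse of `x + y` with `(x + y) ^ 2 * z = x`.
The remainder `a - a ^ 2 * z` is exactly `y`, so any condition on it carries over.
-/

/-- `z` is the group inverse of `x`: the two commute and are inner inverses of each other. The
conjunction is kept in the form in which group invertibility is spelled out in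
`agDrazin_iff_core_acc_decomposition`. -/
def IsGroupInverse {M : Type*} [Mul M] (z x : M) : Prop :=
  x * z = z * x ∧ z * x * z = z ∧ x * z * x = x

section CommutingOuterInverse

variable {M R : Type*} [Monoid M] [Ring R]

theorem sq_mul_mul_of_commute_of_outer {a z : M} (comm : Commute a z) (outer : z * a * z = z) :
    a ^ 2 * z * z = a * z :=
  calc
    a ^ 2 * z * z = a * (a * z * z) := by simp only [sq, mul_assoc]
    _ = a * (z * a * z) := by rw [comm.eq]
    _ = a * z := by rw [outer]

theorem isGroupInverse_sq_mul {a z : M} (comm : Commute a z) (outer : z * a * z = z) :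
    IsGroupInverse z (a ^ 2 * z) := by
  have core_mul : a ^ 2 * z * z = a * z := sq_mul_mul_of_commute_of_outer comm outer
  have core_comm : a ^ 2 * z * z = z * (a ^ 2 * z) :=
    ((comm.pow_left 2).mul_left (Commute.refl z)).eq
  refine ⟨core_comm, ?_, ?_⟩
  · rw [← core_comm, core_mul, comm.eq, outer]
  · calc
      a ^ 2 * z * z * (a ^ 2 * z) = a * (z * (a ^ 2 * z)) := by rw [core_mul, mul_assoc]
      _ = a ^ 2 * z := by rw [← core_comm, core_mul, ← mul_assoc, sq]

theorem sq_mul_mul_sq_mul {a z : M} (comm : Commute a z) (outer : z * a * z = z) :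
    a ^ 2 * z * (a ^ 2 * z) = a ^ 2 * z * a :=
  calc
    a ^ 2 * z * (a ^ 2 * z) = a ^ 2 * (z * a * (a * z)) := by simp only [sq, mul_assoc]
    _ = a ^ 2 * (z * a * z * a) := by rw [comm.eq, ← mul_assoc (z * a)]
    _ = a ^ 2 * z * a := by rw [outer, mul_assoc]

theorem sq_mul_mul_sub_sq_mul {a z : R} (comm : Commute a z) (outer : z * a * z = z) :
    a ^ 2 * z * (a - a ^ 2 * z) = 0 := by
  rw [mul_sub, sq_mul_mul_sq_mul comm outer, sub_self]

theorem commute_sq_mul_sub_sq_mul {a z : R} (comm : Commute a z) :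
    Commute (a ^ 2 * z) (a - a ^ 2 * z) :=
  Commute.sub_right ((Commute.refl a).pow_left 2 |>.mul_left comm.symm) (Commute.refl _)

end CommutingOuterInverse

namespace IsGroupInverse

section SemigroupWithZero

variable {M : Type*} [SemigroupWithZero M] {x y z : M}

theorem mul_inverse_eq_zero (h : IsGroupInverse z x) (hyx : y * x = 0) : y * z = 0 := by
  obtain ⟨comm, outer, -⟩ := h
  calc
    y * z = y * (x * z * z) := by rw [comm, outer]
    _ = y * x * z * z := by simp only [mul_assoc]
    _ = 0 := by simp only [hyx, zero_mul]

theorem inverse_mul_eq_zero (h : IsGroupInverse z x) (hxy : x * y = 0) : z * y = 0 := by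
  obtain ⟨comm, outer, -⟩ := h
  calc
    z * y = z * (x * z) * y := by rw [← mul_assoc, outer]
    _ = z * z * (x * y) := by simp only [comm, mul_assoc]
    _ = 0 := by rw [hxy, mul_zero]

end SemigroupWithZero

theorem commute_add {R : Type*} [NonUnitalSemiring R] {x y z : R} (h : IsGroupInverse z x)
    (hxy : x * y = 0) (hyx : y * x = 0) : Commute (x + y) z :=
  have comm_y : Commute y z :=
    (h.mul_inverse_eq_zero hyx).trans (h.inverse_mul_eq_zero hxy).symm
  Commute.add_left h.1 comm_y

theorem mul_add_mul {R : Type*} [NonUnitalSemiring R] {x y z : R} (h : IsGroupInverse z x)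
    (hxy : x * y = 0) : z * (x + y) * z = z := by
  rw [mul_add, h.inverse_mul_eq_zero hxy, add_zero, h.2.1]

theorem add_sq_mul {R : Type*} [Semiring R] {x y z : R} (h : IsGroupInverse z x)
    (hyx : y * x = 0) : (x + y) ^ 2 * z = x := by
  have add_mul_inverse : (x + y) * z = x * z := by
    rw [add_mul, h.mul_inverse_eq_zero hyx, add_zero]
  have add_mul_self : (x + y) * x = x * x := by rw [add_mul, hyx, add_zero]
  obtain ⟨comm, -, inner⟩ := h
  calc
    (x + y) ^ 2 * z = (x + y) * x * z := by rw [sq, mul_assoc, add_mul_inverse, mul_assoc]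
    _ = x * z * x := by rw [add_mul_self, mul_assoc, mul_assoc, comm]
    _ = x := inner

end IsGroupInverse

theorem agDrazin_iff_core_acc_decomposition_general {R : Type*} [Ring R] (P : R → Prop) (a : R) :
    (∃ z : R, Commute a z ∧ z * a * z = z ∧ P (a - a ^ 2 * z)) ↔
      ∃ x y : R, a = x + y ∧ x * y = 0 ∧ y * x = 0 ∧ (∃ z : R, IsGroupInverse z x) ∧ P y := by
  constructor
  · rintro ⟨z, comm, outer, hP⟩
    have core_mul_rest : a ^ 2 * z * (a - a ^ 2 * z) = 0 := sq_mul_mul_sub_sq_mul comm outer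
    have rest_mul_core : (a - a ^ 2 * z) * (a ^ 2 * z) = 0 :=
      (commute_sq_mul_sub_sq_mul comm).eq ▸ core_mul_rest
    exact ⟨a ^ 2 * z, a - a ^ 2 * z, (add_sub_cancel _ _).symm, core_mul_rest, rest_mul_core,
      ⟨z, isGroupInverse_sq_mul comm outer⟩, hP⟩
  · rintro ⟨x, y, rfl, hxy, hyx, ⟨z, hz⟩, hP⟩
    have rest_eq : x + y - (x + y) ^ 2 * z = y := by rw [hz.add_sq_mul hyx, add_sub_cancel_left]
    exact ⟨z, hz.commute_add hxy hyx, hz.mul_add_mul hxy, rest_eq.symm ▸ hP⟩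

theorem agDrazin_iff_core_acc_decomposition {A : Type*} [NormedRing A] [NormedAlgebra ℂ A]
    [CompleteSpace A] (a : A) :
    IsAgDrazinInv a ↔
      ∃ x y : A, a = x + y ∧ x * y = 0 ∧ y * x = 0 ∧
        (∃ z : A, x * z = z * x ∧ z * x * z = z ∧ x * z * x = x) ∧ MemAcc y :=
  agDrazin_iff_core_acc_decomposition_general MemAcc a
end
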